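/- Suppose α has an adjusted nearest integer expansion and let d_n^± be the quantities associated to γ_*. If it is not the case that a_{i+1} = 2 with ε_{i+1} = +1, then for both choices of sign σ ∈ {+1, −1}: (1/4)·(1 + ᾱ_i − σ·d_i^−)·(1 − ε_{i+1}α_i + σ·d_i^+)/(1 + ε_{i+1}ᾱ_i α_i) ≥ 2057/51728 (= 1/25.147…). -/

import Mathlib

open Filter Finset

attribute [local instance] Classical.propDecidable

/-- Distance from `x` to the nearest integer, `‖x‖`. -/
noncomputable def nint (x : ℝ) : ℝ := |x - round x|

/-- The two-sided inhomogeneous approximation constant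
`M(α,γ) = liminf_{|n|→∞} |n|·‖nα-γ‖`. -/
noncomputable def Mval (α γ : ℝ) : ℝ :=
  Filter.liminf (fun n : ℤ => (|n| : ℝ) * nint (n * α - γ)) Filter.cofinite

/-- Denominators `q_i` of a semi-regular continued fraction with partial quotients `a`
and signs `e`: `q_0 = 1`, `q_1 = a_1`, `q_i = a_i q_{i-1} + ε_i q_{i-2}`. -/
noncomputable def qs (a e : ℕ → ℤ) : ℕ → ℤ
  | 0 => 1
  | 1 => a 1
  | i + 2 => a (i + 2) * qs a e (i + 1) + e (i + 2) * qs a e i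

/-- Reversed tails `ᾱ_i = q_{i-1}/q_i` (with `ᾱ_0 = 0`). -/
noncomputable def ab (a e : ℕ → ℤ) (i : ℕ) : ℝ :=
  if i = 0 then 0 else (qs a e (i - 1) : ℝ) / (qs a e i : ℝ)

/-- An adjusted nearest integer expansion of `α`: a semi-regular continued fraction
`α = 1/(a_1 + ε_2/(a_2 + ε_3/(a_3 + ⋯)))` with tails `t i = α_i`, satisfying the
conditions (i)-(iv) of an adjusted expansion. -/
structure ANIE (α : ℝ) where
  /-- partial quotients `a_i` (for `i ≥ 1`) -/
  a : ℕ → ℤ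
  /-- signs `ε_i` -/
  e : ℕ → ℤ
  /-- tails: `t i = α_i`, `t 0 = α` -/
  t : ℕ → ℝ
  ha : ∀ i, 1 ≤ i → 2 ≤ a i
  he : ∀ i, e i = 1 ∨ e i = -1
  he1 : e 1 = 1
  ht0 : t 0 = α
  htpos : ∀ i, 0 < t i
  htlt1 : ∀ i, t i < 1
  hrec : ∀ i, t i = 1 / ((a (i + 1) : ℝ) + (e (i + 2) : ℝ) * t (i + 1))
  /-- condition (i): `a_i = 2` implies `ε_i = +1` or `ε_{i+1} = +1` -/
  hcond1 : ∀ i, 1 ≤ i → a i = 2 → e i = 1 ∨ e (i + 1) = 1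
  /-- condition (ii): if `a_i = 2`, `ε_i = -1` then `1/ᾱ_{i-1} - 1/α_i ≥ 1` -/
  hcond2 : ∀ i, 1 ≤ i → a i = 2 → e i = -1 → 1 / ab a e (i - 1) - 1 / t i ≥ 1
  /-- condition (iii): if `a_i = 2`, `ε_{i+1} = -1` then `1/α_i - 1/ᾱ_{i-1} > 1` -/
  hcond3 : ∀ i, 1 ≤ i → a i = 2 → e (i + 1) = -1 → 1 / t i - 1 / ab a e (i - 1) > 1
  /-- condition (iv): no block `2, (-3,)^k, -2` in the sequence `(ε_i a_i)` -/
  hcond4 : ∀ i k, 1 ≤ i →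
    ¬(e i * a i = 2 ∧ (∀ j, j < k → e (i + 1 + j) * a (i + 1 + j) = -3) ∧
        e (i + 1 + k) * a (i + 1 + k) = -2)

namespace ANIE

variable {α : ℝ}

/-- `D n = D_{n-1} = α_0 α_1 ⋯ α_{n-1}` (so `D 0 = 1`, `D 1 = α`). -/
noncomputable def D (E : ANIE α) (n : ℕ) : ℝ := ∏ j ∈ Finset.range n, E.t j

/-- The number of indices `1 ≤ k ≤ i` with `a_k` odd. -/
noncomputable def oddIdx (E : ANIE α) (i : ℕ) : ℕ :=
  ((Finset.Icc 1 i).filter fun k => Odd (E.a k)).card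

/-- `λ_i`: zero if `a_i` is even, `(-1)^j` if `a_i = a_{n_j}` is the `j`-th odd partial
quotient. -/
noncomputable def lam (E : ANIE α) (i : ℕ) : ℤ :=
  if Odd (E.a i) then (-1) ^ E.oddIdx i else 0

/-- `γ_* = Σ_{i≥1} (a_i - 1 + ε_i + λ_i)/2 · D_{i-1}`. -/
noncomputable def gammaStar (E : ANIE α) : ℝ :=
  ∑' k : ℕ,
    (((E.a (k + 1) : ℝ) - 1 + (E.e (k + 1) : ℝ) + (E.lam (k + 1) : ℝ)) / 2) * E.D (k + 1)

/-- `ᾱ_i = q_{i-1}/q_i`. -/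
noncomputable def abar (E : ANIE α) (i : ℕ) : ℝ := ab E.a E.e i

/-- `δ_i = -(-ε_1)(-ε_2)⋯(-ε_{i+1})`. -/
noncomputable def delta (E : ANIE α) (i : ℕ) : ℤ := -∏ j ∈ Finset.Icc 1 (i + 1), (-E.e j)

/-- `d_n^- = (Σ_{i=1}^n t_i δ_{i-1} q_{i-1}) / (δ_{n-1} q_n)` for `γ_*` (`t_i = λ_i`). -/
noncomputable def dminus (E : ANIE α) (n : ℕ) : ℝ :=
  (∑ i ∈ Finset.Icc 1 n, (E.lam i : ℝ) * (E.delta (i - 1) : ℝ) * (qs E.a E.e (i - 1) : ℝ)) /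
    ((E.delta (n - 1) : ℝ) * (qs E.a E.e n : ℝ))

/-- `d_n^+ = (Σ_{i=n+1}^∞ t_i D_{i-1}) / D_{n-1}` for `γ_*` (`t_i = λ_i`). -/
noncomputable def dplus (E : ANIE α) (n : ℕ) : ℝ :=
  (∑' k : ℕ, (E.lam (n + 1 + k) : ℝ) * E.D (n + 1 + k)) / E.D n

/-- `i ∈ S(γ_*)`: `|d_i^-| ≤ 1 - ᾱ_i` and `-(1-ε_{i+1}α_i) ≤ d_i^+ ≤ 1+ε_{i+1}α_i`. -/
def inS (E : ANIE α) (i : ℕ) : Prop :=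
  |E.dminus i| ≤ 1 - E.abar i ∧
    -(1 - (E.e (i + 1) : ℝ) * E.t i) ≤ E.dplus i ∧
      E.dplus i ≤ 1 + (E.e (i + 1) : ℝ) * E.t i

end ANIE

/-!
With the parity sign `s_i = (-1) ^ #{k ≤ i | a_k odd}` one has `λ_{i+1} = (s_{i+1} - s_i) / 2`.
The partial sums of `λ` over any window are then at most `1` in absolute value, and Abel summation
against the decreasing products `D` gives `|d_i⁺| ≤ α_i`. On the other side `s_i d_i⁻` obeys a
two-case recursion whose invariant `-7/25 ≤ s_i d_i⁻ ≤ (7 + 18 ᾱ_i)/25` is preserved because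
`ᾱ_i ≤ 5/8`. Hence `1 + ᾱ_i - σ d_i⁻ ≥ (18 + 7 ᾱ_i)/25` and
`1 - ε_{i+1} α_i + σ d_i⁺ ≥ 1 - ε_{i+1} α_i - α_i`. The critical case is `ε_{i+1} = 1`: there
`a_{i+1} ≥ 3` forces `α_i ≤ 7/18`, and `(18 + 7 ᾱ)/25 · (2/9)/4 = (1 + 7/18 · ᾱ)/25`, which gives
the slightly better constant `1/25`.
-/

theorem norm_sum_range_smul_le_of_antitone {V : Type*} [NormedAddCommGroup V] [NormedSpace ℝ V]
    {f : ℕ → ℝ} {z : ℕ → V} {b : ℝ} (hf : Antitone f) (hf0 : ∀ n, 0 ≤ f n)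
    (hz : ∀ n, ‖∑ i ∈ range n, z i‖ ≤ b) (n : ℕ) :
    ‖∑ i ∈ range n, f i • z i‖ ≤ f 0 * b := by
  have hb : 0 ≤ b := by simpa using hz 0
  rcases n with _ | n
  · simpa using mul_nonneg (hf0 0) hb
  have hstep (i : ℕ) : ‖(f (i + 1) - f i) • ∑ j ∈ range (i + 1), z j‖ ≤ (f i - f (i + 1)) * b := by
    rw [norm_smul, Real.norm_eq_abs, abs_sub_comm, abs_of_nonneg (sub_nonneg.2 (hf i.le_succ))]
    exact mul_le_mul_of_nonneg_left (hz _) (sub_nonneg.2 (hf i.le_succ))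
  have hlast : ‖f n • ∑ j ∈ range (n + 1), z j‖ ≤ f n * b := by
    rw [norm_smul, Real.norm_of_nonneg (hf0 n)]
    exact mul_le_mul_of_nonneg_left (hz _) (hf0 n)
  rw [sum_range_by_parts, Nat.add_sub_cancel]
  calc ‖f n • ∑ j ∈ range (n + 1), z j -
          ∑ i ∈ range n, (f (i + 1) - f i) • ∑ j ∈ range (i + 1), z j‖
      ≤ f n * b + ∑ i ∈ range n, (f i - f (i + 1)) * b :=
        (norm_sub_le _ _).trans (add_le_add hlast (norm_sum_le_of_le _ fun i _ => hstep i))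
    _ = f 0 * b := by rw [← sum_mul, sum_range_sub']; ring

theorem le_of_inv_le_inv_of_pos {K : Type*} [Field K] [LinearOrder K] [IsStrictOrderedRing K]
    {x r : K} (hr : 0 < r) (h : r⁻¹ ≤ x⁻¹) : x ≤ r :=
  (inv_le_inv₀ hr (inv_pos.1 ((inv_pos.2 hr).trans_le h))).1 h

namespace ANIE

variable {α : ℝ} (E : ANIE α) (n : ℕ)

lemma neg_le_e_mul {x : ℝ} (hx : 0 ≤ x) : -x ≤ E.e n * x := by
  rcases E.he n with he | he <;> simp [he, hx]

lemma two_le_a : (2 : ℝ) ≤ E.a (n + 1) := mod_cast E.ha (n + 1) n.succ_pos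

lemma a_eq_two_or_three_le : E.a (n + 1) = 2 ∨ (3 : ℝ) ≤ E.a (n + 1) := by
  rcases (E.ha (n + 1) n.succ_pos).eq_or_lt with ha | ha
  · exact .inl ha.symm
  · exact .inr (mod_cast ha)

lemma three_le_a_of_odd (ha : Odd (E.a (n + 1))) : (3 : ℝ) ≤ E.a (n + 1) :=
  (E.a_eq_two_or_three_le n).resolve_left fun h => by simp [h, Int.odd_iff] at ha

lemma e_add_two_eq_one (ha : E.a (n + 1) = 2) (he : E.e (n + 1) = -1) : E.e (n + 2) = 1 :=
  (E.hcond1 (n + 1) n.succ_pos ha).resolve_left (by omega)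

lemma qs_pos_and_le_succ : 0 < qs E.a E.e n ∧ qs E.a E.e n ≤ qs E.a E.e (n + 1) := by
  induction n with
  | zero => exact ⟨one_pos, one_le_two.trans (E.ha 1 le_rfl)⟩
  | succ n ih =>
    obtain ⟨hpos, hle⟩ := ih
    have ha := E.ha (n + 2) (by omega)
    refine ⟨hpos.trans_le hle, ?_⟩
    rw [qs]
    rcases E.he (n + 2) with he | he <;> rw [he] <;> nlinarith

lemma qs_pos : (0 : ℝ) < qs E.a E.e n := mod_cast (E.qs_pos_and_le_succ n).1

lemma abar_zero : E.abar 0 = 0 := by simp [abar, ab]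

lemma abar_succ : E.abar (n + 1) = qs E.a E.e n / qs E.a E.e (n + 1) := by simp [abar, ab]

lemma abar_succ_pos : 0 < E.abar (n + 1) := by
  rw [abar_succ]
  exact div_pos (E.qs_pos _) (E.qs_pos _)

lemma abar_nonneg : 0 ≤ E.abar n := by
  rcases n with _ | n
  · exact E.abar_zero.ge
  · exact (E.abar_succ_pos n).le

lemma inv_abar_succ : (E.abar (n + 1))⁻¹ = E.a (n + 1) + E.e (n + 1) * E.abar n := by
  rcases n with _ | n
  · simp [abar_succ, abar_zero, qs]
  · have hq := (E.qs_pos (n + 1)).ne'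
    rw [abar_succ, abar_succ, inv_div, qs]
    push_cast
    field_simp

lemma inv_t : (E.t n)⁻¹ = E.a (n + 1) + E.e (n + 2) * E.t (n + 1) := by
  rw [E.hrec n, one_div, inv_inv]

lemma t_le_half (he : E.e (n + 1) = -1) : E.t n ≤ 1 / 2 := by
  refine le_of_inv_le_inv_of_pos one_half_pos ?_
  rw [inv_t, one_div, inv_inv]
  rcases E.a_eq_two_or_three_le n with ha | ha
  · simp [ha, E.e_add_two_eq_one n ha he, (E.htpos (n + 1)).le]
  · linarith [E.neg_le_e_mul (n + 2) (E.htpos (n + 1)).le, E.htlt1 (n + 1)]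

lemma neg_half_le_e_mul_t : -(1 / 2) ≤ E.e (n + 1) * E.t n := by
  rcases E.he (n + 1) with he | he
  · have := E.htpos n
    rw [he, Int.cast_one]
    linarith
  · simpa [he] using E.t_le_half n he

lemma t_le_inv_a_sub_half : E.t n ≤ (E.a (n + 1) - 1 / 2 : ℝ)⁻¹ := by
  rw [← inv_inv (E.t n), inv_t]
  exact inv_anti₀ (by linarith [E.two_le_a n]) (by linarith [E.neg_half_le_e_mul_t (n + 1)])

lemma t_le_two_thirds : E.t n ≤ 2 / 3 :=
  (E.t_le_inv_a_sub_half n).trans <| inv_le_of_inv_le₀ (by norm_num) (by linarith [E.two_le_a n])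

lemma one_add_inv_t_le_inv_abar (ha : E.a (n + 1) = 2) (he : E.e (n + 1) = -1) :
    1 + (E.t (n + 1))⁻¹ ≤ (E.abar n)⁻¹ := by
  have h := E.hcond2 (n + 1) n.succ_pos ha he
  rw [Nat.add_sub_cancel, one_div, one_div] at h
  rw [abar]
  linarith

lemma abar_le_two_fifths (ha : E.a (n + 1) = 2) (he : E.e (n + 1) = -1) : E.abar n ≤ 2 / 5 := by
  have ht : (2 / 3 : ℝ)⁻¹ ≤ (E.t (n + 1))⁻¹ := inv_anti₀ (E.htpos _) (E.t_le_two_thirds _)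
  have hinv : (2 / 5 : ℝ)⁻¹ ≤ (E.abar n)⁻¹ := by
    linarith [E.one_add_inv_t_le_inv_abar n ha he]
  exact le_of_inv_le_inv_of_pos (by norm_num) hinv

lemma abar_le_five_eighths : E.abar n ≤ 5 / 8 := by
  induction n with
  | zero => rw [abar_zero]; norm_num
  | succ n ih =>
    refine le_of_inv_le_inv_of_pos (by norm_num) ?_
    rw [inv_abar_succ]
    have hb := E.abar_nonneg n
    rcases E.a_eq_two_or_three_le n with ha | ha
    · rcases E.he (n + 1) with he | he
      · rw [ha, he]; push_cast; linarith
      · have := E.abar_le_two_fifths n ha he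
        rw [ha, he]; push_cast; linarith
    · linarith [E.neg_le_e_mul (n + 1) hb]

lemma t_succ_le_three_sevenths (ha : E.a (n + 1) = 3) (he : E.e (n + 1) = 1)
    (he' : E.e (n + 2) = -1) : E.t (n + 1) ≤ 3 / 7 := by
  rcases E.a_eq_two_or_three_le (n + 1) with ha' | ha'
  · have hinv : (E.t (n + 2))⁻¹ ≤ 3 := by
      have h := E.one_add_inv_t_le_inv_abar (n + 1) ha' he'
      rw [inv_abar_succ, ha, he] at h
      push_cast at h
      linarith [E.abar_le_five_eighths n]
    have ht : 3⁻¹ ≤ E.t (n + 2) := inv_le_of_inv_le₀ (E.htpos _) hinv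
    refine le_of_inv_le_inv_of_pos (by norm_num) ?_
    rw [inv_t, ha', E.e_add_two_eq_one (n + 1) ha' he']
    push_cast
    linarith
  · exact (E.t_le_inv_a_sub_half _).trans <| inv_le_of_inv_le₀ (by norm_num) (by linarith)

lemma t_le_seven_eighteenths (ha : (3 : ℝ) ≤ E.a (n + 1)) (he : E.e (n + 1) = 1) :
    E.t n ≤ 7 / 18 := by
  refine le_of_inv_le_inv_of_pos (by norm_num) ?_
  rw [inv_t]
  have ht := E.htpos (n + 1)
  rcases E.he (n + 2) with he' | he'
  · rw [he', Int.cast_one]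
    linarith
  have ha_int : 3 ≤ E.a (n + 1) := mod_cast ha
  rcases ha_int.eq_or_lt with ha3 | ha4
  · have := E.t_succ_le_three_sevenths n ha3.symm he he'
    rw [← ha3, he']
    push_cast
    linarith
  · have : (4 : ℝ) ≤ E.a (n + 1) := mod_cast ha4
    linarith [E.neg_half_le_e_mul_t (n + 1)]

/-- The sign `(-1) ^ #{1 ≤ k ≤ n | a_k odd}`, which is the value of the last nonzero `λ_k` with
`k ≤ n` (and `1` if there is none). -/
noncomputable def oddSign : ℝ := (-1) ^ E.oddIdx n

lemma abs_oddSign : |E.oddSign n| = 1 := abs_neg_one_pow _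

lemma oddIdx_succ : E.oddIdx (n + 1) = E.oddIdx n + if Odd (E.a (n + 1)) then 1 else 0 := by
  simp only [oddIdx, card_filter]
  exact sum_Icc_succ_top (by omega) _

lemma oddSign_succ_of_odd (ha : Odd (E.a (n + 1))) : E.oddSign (n + 1) = -E.oddSign n := by
  simp [oddSign, oddIdx_succ, ha, pow_succ]

lemma oddSign_succ_of_even (ha : Even (E.a (n + 1))) : E.oddSign (n + 1) = E.oddSign n := by
  simp [oddSign, oddIdx_succ, Int.not_odd_iff_even.2 ha]

lemma lam_succ : (E.lam (n + 1) : ℝ) = (E.oddSign (n + 1) - E.oddSign n) / 2 := by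
  rcases Int.even_or_odd (E.a (n + 1)) with ha | ha
  · simp [lam, Int.not_odd_iff_even.2 ha, E.oddSign_succ_of_even n ha]
  · rw [lam, if_pos ha, Int.cast_pow, Int.cast_neg, Int.cast_one, ← oddSign,
      E.oddSign_succ_of_odd n ha]
    ring

lemma abs_sum_lam_le_one (K : ℕ) : |∑ k ∈ range K, (E.lam (n + 1 + k) : ℝ)| ≤ 1 := by
  have hsum : ∑ k ∈ range K, (E.lam (n + 1 + k) : ℝ) = (E.oddSign (n + K) - E.oddSign n) / 2 := by
    simp_rw [Nat.add_right_comm n 1, lam_succ, ← sum_div]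
    exact congrArg (· / 2) (sum_range_sub (fun k => E.oddSign (n + k)) K)
  have h := abs_sub (E.oddSign (n + K)) (E.oddSign n)
  rw [abs_oddSign, abs_oddSign] at h
  rw [hsum, abs_div, abs_two]
  linarith

lemma D_pos : 0 < E.D n := prod_pos fun j _ => E.htpos j

lemma D_succ : E.D (n + 1) = E.D n * E.t n := prod_range_succ _ _

lemma D_antitone : Antitone E.D :=
  antitone_nat_of_succ_le fun n =>
    E.D_succ n ▸ mul_le_of_le_one_right (E.D_pos n).le (E.htlt1 n).le

lemma D_le_two_thirds_pow : E.D n ≤ (2 / 3) ^ n := by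
  calc E.D n ≤ ∏ _j ∈ range n, (2 / 3 : ℝ) :=
        prod_le_prod (fun j _ => (E.htpos j).le) fun j _ => E.t_le_two_thirds j
    _ = (2 / 3) ^ n := by rw [prod_const, card_range]

lemma abs_lam_le_one : |(E.lam n : ℝ)| ≤ 1 := by
  unfold lam
  split_ifs <;> simp

lemma summable_lam_mul_D : Summable fun k => (E.lam (n + 1 + k) : ℝ) * E.D (n + 1 + k) := by
  have hgeom : Summable fun k => (2 / 3 : ℝ) ^ (k + (n + 1)) :=
    (summable_nat_add_iff _).2 (summable_geometric_of_lt_one (by norm_num) (by norm_num))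
  refine hgeom.of_norm_bounded fun k => ?_
  rw [norm_mul, Real.norm_of_nonneg (E.D_pos _).le, Nat.add_comm (n + 1) k]
  exact (mul_le_of_le_one_left (E.D_pos _).le (E.abs_lam_le_one _)).trans
    (E.D_le_two_thirds_pow _)

lemma abs_dplus_le_t : |E.dplus n| ≤ E.t n := by
  have hpartial (K : ℕ) :
      ‖∑ k ∈ range K, (E.lam (n + 1 + k) : ℝ) * E.D (n + 1 + k)‖ ≤ E.D (n + 1) := by
    have hanti : Antitone fun k => E.D (n + 1 + k) :=
      fun _ _ hjk => E.D_antitone (Nat.add_le_add_left hjk _)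
    simpa [mul_comm] using norm_sum_range_smul_le_of_antitone
      (z := fun k => (E.lam (n + 1 + k) : ℝ)) hanti (fun _ => (E.D_pos _).le)
      (E.abs_sum_lam_le_one n) K
  have htsum := le_of_tendsto' (E.summable_lam_mul_D n).tendsto_sum_tsum_nat.norm hpartial
  rwa [dplus, abs_div, abs_of_pos (E.D_pos n), div_le_iff₀ (E.D_pos n), mul_comm (E.t n), ← D_succ]

lemma delta_ne_zero : (E.delta n : ℝ) ≠ 0 := by
  rw [delta, Int.cast_ne_zero, neg_ne_zero, prod_ne_zero_iff]
  rintro j -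
  rcases E.he j with he | he <;> simp [he]

lemma delta_succ : E.delta (n + 1) = -E.e (n + 2) * E.delta n := by
  rw [delta, delta, prod_Icc_succ_top (by omega)]
  ring

lemma dminus_zero : E.dminus 0 = 0 := by simp [dminus]

lemma dminus_succ :
    E.dminus (n + 1) = E.abar (n + 1) * (E.lam (n + 1) - E.e (n + 1) * E.dminus n) := by
  rcases n with _ | n
  · have hδ := E.delta_ne_zero 0
    rw [abar_succ, dminus_zero, dminus]
    simp only [zero_add, Icc_self, sum_singleton, Nat.sub_self, mul_zero, sub_zero]
    field_simp
  · have hδ := E.delta_ne_zero n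
    have hq₁ := (E.qs_pos (n + 1)).ne'
    have hq₂ := (E.qs_pos (n + 2)).ne'
    have he : (E.e (n + 2) : ℝ) ^ 2 = 1 := by rcases E.he (n + 2) with he | he <;> simp [he]
    have he0 : (E.e (n + 2) : ℝ) ≠ 0 := fun h => by simp [h] at he
    rw [abar_succ, dminus, dminus, sum_Icc_succ_top (by omega)]
    simp only [Nat.add_sub_cancel, delta_succ, Int.cast_mul, Int.cast_neg]
    field_simp
    linear_combination (∑ k ∈ Icc 1 (n + 1),
      (E.lam k : ℝ) * E.delta (k - 1) * qs E.a E.e (k - 1)) * he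

lemma oddSign_mul_dminus_succ_of_odd (ha : Odd (E.a (n + 1))) :
    E.oddSign (n + 1) * E.dminus (n + 1) =
      E.abar (n + 1) * (1 + E.e (n + 1) * (E.oddSign n * E.dminus n)) := by
  have hs : E.oddSign n ^ 2 = 1 := by rw [← sq_abs, abs_oddSign, one_pow]
  rw [dminus_succ, lam_succ, E.oddSign_succ_of_odd n ha]
  linear_combination E.abar (n + 1) * hs

lemma oddSign_mul_dminus_succ_of_even (ha : Even (E.a (n + 1))) :
    E.oddSign (n + 1) * E.dminus (n + 1) =
      E.abar (n + 1) * -(E.e (n + 1) * (E.oddSign n * E.dminus n)) := by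
  rw [dminus_succ, lam_succ, E.oddSign_succ_of_even n ha]
  ring

-- Dividing by `ᾱ_{n+1} = 1 / (a_{n+1} + ε_{n+1} ᾱ_n)` makes the interval conditions affine in `w`
-- and `ᾱ_n`.
lemma abar_succ_mul_mem_Icc {w : ℝ}
    (hlow : -(7 * (E.a (n + 1) + E.e (n + 1) * E.abar n)) ≤ 25 * w)
    (hupp : 25 * w ≤ 7 * (E.a (n + 1) + E.e (n + 1) * E.abar n) + 18) :
    E.abar (n + 1) * w ∈ Set.Icc (-(7 / 25)) ((7 + 18 * E.abar (n + 1)) / 25) := by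
  have hc := E.abar_succ_pos n
  rw [← inv_abar_succ] at hlow hupp
  have hcc := mul_inv_cancel₀ hc.ne'
  have h₁ := mul_le_mul_of_nonneg_left hlow hc.le
  have h₂ := mul_le_mul_of_nonneg_left hupp hc.le
  constructor <;> linarith

lemma oddSign_mul_dminus_mem_Icc :
    E.oddSign n * E.dminus n ∈ Set.Icc (-(7 / 25)) ((7 + 18 * E.abar n) / 25) := by
  induction n with
  | zero => rw [dminus_zero, abar_zero]; norm_num
  | succ n ih =>
    obtain ⟨hlow, hupp⟩ := ih
    have hb₀ := E.abar_nonneg n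
    have hb₁ := E.abar_le_five_eighths n
    rcases Int.even_or_odd (E.a (n + 1)) with ha | ha
    · rw [E.oddSign_mul_dminus_succ_of_even n ha]
      have ha₂ := E.two_le_a n
      rcases E.he (n + 1) with he | he <;>
        apply abar_succ_mul_mem_Icc <;> rw [he] <;> push_cast <;> linarith
    · rw [E.oddSign_mul_dminus_succ_of_odd n ha]
      have ha₃ := E.three_le_a_of_odd n ha
      rcases E.he (n + 1) with he | he <;>
        apply abar_succ_mul_mem_Icc <;> rw [he] <;> push_cast <;> linarith

lemma abs_dminus_le : |E.dminus n| ≤ (7 + 18 * E.abar n) / 25 := by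
  obtain ⟨hlow, hupp⟩ := E.oddSign_mul_dminus_mem_Icc n
  rw [← one_mul |E.dminus n|, ← E.abs_oddSign n, ← abs_mul, abs_le]
  exact ⟨by linarith [E.abar_nonneg n], hupp⟩

lemma one_add_e_mul_abar_mul_t_pos : 0 < 1 + E.e (n + 1) * E.abar n * E.t n := by
  have h : E.abar n * E.t n < 1 :=
    mul_lt_one_of_nonneg_of_lt_one_left (E.abar_nonneg n)
      ((E.abar_le_five_eighths n).trans_lt (by norm_num)) (E.htlt1 n).le
  rw [mul_assoc]
  linarith [E.neg_le_e_mul (n + 1) (mul_nonneg (E.abar_nonneg n) (E.htpos n).le)]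

lemma one_add_e_mul_abar_mul_t_le (h : ¬(E.a (n + 1) = 2 ∧ E.e (n + 1) = 1)) :
    1 + E.e (n + 1) * E.abar n * E.t n ≤
      1 / 4 * (18 + 7 * E.abar n) * (1 - E.e (n + 1) * E.t n - E.t n) := by
  have hb := E.abar_nonneg n
  have ht := (E.htpos n).le
  rcases E.he (n + 1) with he | he
  · have ha : (3 : ℝ) ≤ E.a (n + 1) :=
      (E.a_eq_two_or_three_le n).resolve_left fun ha => h ⟨ha, he⟩
    have ht' := E.t_le_seven_eighteenths n ha he
    rw [he, Int.cast_one]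
    calc 1 + 1 * E.abar n * E.t n ≤ 1 + 1 * E.abar n * (7 / 18) := by gcongr
      _ = 1 / 4 * (18 + 7 * E.abar n) * (2 / 9) := by ring
      _ ≤ 1 / 4 * (18 + 7 * E.abar n) * (1 - 1 * E.t n - E.t n) := by gcongr; linarith
  · have hbt := mul_nonneg hb ht
    rw [he]
    push_cast
    linarith

end ANIE

theorem stmt13_general {α : ℝ} (E : ANIE α) (i : ℕ) (h : ¬(E.a (i + 1) = 2 ∧ E.e (i + 1) = 1))
    {σ : ℝ} (hσ : |σ| ≤ 1) :
    1 / 25 ≤ 1 / 4 * (1 + E.abar i - σ * E.dminus i) *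
      ((1 - (E.e (i + 1) : ℝ) * E.t i + σ * E.dplus i) /
        (1 + (E.e (i + 1) : ℝ) * E.abar i * E.t i)) := by
  have hpos := E.one_add_e_mul_abar_mul_t_pos i
  have hle := E.one_add_e_mul_abar_mul_t_le i h
  have hb := E.abar_nonneg i
  have hσd (d : ℝ) : |σ * d| ≤ |d| := abs_mul σ d ▸ mul_le_of_le_one_left (abs_nonneg d) hσ
  have hminus : (18 + 7 * E.abar i) / 25 ≤ 1 + E.abar i - σ * E.dminus i := by
    linarith [le_of_abs_le ((hσd _).trans (E.abs_dminus_le i))]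
  have hplus : 1 - E.e (i + 1) * E.t i - E.t i ≤ 1 - E.e (i + 1) * E.t i + σ * E.dplus i := by
    linarith [neg_le_of_abs_le ((hσd _).trans (E.abs_dplus_le_t i))]
  have hminus₀ : 0 ≤ 1 + E.abar i - σ * E.dminus i := by linarith
  have hplus₀ : 0 ≤ 1 - E.e (i + 1) * E.t i - E.t i :=
    (pos_of_mul_pos_right (hpos.trans_le hle) (by positivity)).le
  rw [← mul_div_assoc, le_div_iff₀ hpos]
  calc 1 / 25 * (1 + E.e (i + 1) * E.abar i * E.t i)
      ≤ 1 / 4 * ((18 + 7 * E.abar i) / 25) * (1 - E.e (i + 1) * E.t i - E.t i) := by linarith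
    _ ≤ 1 / 4 * (1 + E.abar i - σ * E.dminus i) * (1 - E.e (i + 1) * E.t i + σ * E.dplus i) := by
      gcongr

/-- Lemma 6: for an adjusted nearest integer expansion, if not (`a_{i+1} = 2` with
`ε_{i+1} = +1`), then `s_2(i), s_4(i) ≥ 2057/51728 = 1/25.147…` for `γ_*`. -/
theorem stmt13 (α : ℝ) (hirr : Irrational α) (h0 : 0 < α) (h12 : α < 1 / 2)
    (E : ANIE α) (i : ℕ) (hi : 1 ≤ i)
    (h : ¬(E.a (i + 1) = 2 ∧ E.e (i + 1) = 1))
    (σ : ℝ) (hσ : σ = 1 ∨ σ = -1) :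
    1 / 4 * (1 + E.abar i - σ * E.dminus i) *
        ((1 - (E.e (i + 1) : ℝ) * E.t i + σ * E.dplus i) /
          (1 + (E.e (i + 1) : ℝ) * E.abar i * E.t i)) ≥ 2057 / 51728 := by
  have hσ' : |σ| ≤ 1 := by rcases hσ with rfl | rfl <;> simp
  exact (by norm_num : (2057 / 51728 : ℝ) ≤ 1 / 25).trans (stmt13_general E i h hσ')
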